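/- Fix integers 1 ≤ p < n. The initial subalgebra in_{<_pbw}(𝒫) of the Plücker algebra is isomorphic to the generalized Hibi ring A_{∅,Q}(Q,≺) as an ℕ₀-graded algebra, via the isomorphism sending in_{<_pbw}(D_I) to s·y^{v_{∅,Q}(φ_pbw(I))} for every PBW tuple I (where 𝒫 is graded by assigning degree 1 to each D_I and A_{∅,Q}(Q,≺) by degree in s). The inverse isomorphism is given by y_{q_{i,j}} ↦ z_{i,j}·z_{i,i}^{−1} and s ↦ z_{1,1}⋯z_{p,p}. -/

import Mathlib

open scoped Classical

noncomputable section

open MvPolynomial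

/-- The initial (leading) term of `f` with respect to the strict monomial order `lt`:
the term of `f` whose monomial is `lt`-maximal in the support (or `0` if none exists). -/
def initTerm {σ : Type*} (lt : (σ →₀ ℕ) → (σ →₀ ℕ) → Prop)
    (f : MvPolynomial σ ℂ) : MvPolynomial σ ℂ :=
  if h : ∃ m, m ∈ f.support ∧ ∀ m' ∈ f.support, m' ≠ m → lt m' m
  then monomial h.choose (coeff h.choose f)
  else 0

/-- The initial subalgebra of `A` (as a ℂ-submodule): the span of the
initial terms of elements of `A`. -/
def initSpan {σ : Type*} (lt : (σ →₀ ℕ) → (σ →₀ ℕ) → Prop)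
    (A : Subalgebra ℂ (MvPolynomial σ ℂ)) : Submodule ℂ (MvPolynomial σ ℂ) :=
  Submodule.span ℂ (initTerm lt '' (A : Set (MvPolynomial σ ℂ)))

/-- The degree reverse lexicographic order on monomials, where the variables are
enumerated according to `rank`: `a < b` iff `deg a < deg b`, or the degrees agree and
at the last (highest-rank) variable where `a` and `b` differ, `a` has the larger exponent. -/
def degRevLex {σ : Type*} (rank : σ → ℕ) (a b : σ →₀ ℕ) : Prop :=
  (a.sum fun _ e => e) < (b.sum fun _ e => e) ∨
    ((a.sum fun _ e => e) = (b.sum fun _ e => e) ∧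
      ∃ i, b i < a i ∧ ∀ j, rank i < rank j → a j = b j)
/-- The Plücker minor `D_I`: the determinant of the `p×p` matrix whose `j`-th column
is the `α j`-th column of the generic `p×n` matrix of variables `z_{i,j}`. -/
def Dmin (p n : ℕ) (α : Fin p → Fin n) : MvPolynomial (Fin p × Fin n) ℂ :=
  (Matrix.of fun i j : Fin p => (X (i, α j) : MvPolynomial (Fin p × Fin n) ℂ)).det

/-- The Plücker algebra `𝒫`: the subalgebra generated by all minors `D_I`. -/
def Pluecker (p n : ℕ) : Subalgebra ℂ (MvPolynomial (Fin p × Fin n) ℂ) :=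
  Algebra.adjoin ℂ (Set.range (Dmin p n))

/-- `α` is a PBW tuple (0-indexed version): the entries are pairwise distinct, entries
`< p` stand at the position equal to their value, and entries `≥ p` appear in
decreasing order. -/
def IsPBW (p n : ℕ) (α : Fin p → Fin n) : Prop :=
  Function.Injective α ∧ (∀ j : Fin p, (α j : ℕ) < p → (α j : ℕ) = (j : ℕ)) ∧
    ∀ j k : Fin p, p ≤ (α k : ℕ) → (α k : ℕ) < (α j : ℕ) → j < k

/-- The position of the variable `z_{i,j}` in the PBW ordering of the variables: first
by row, then cyclically within the `i`-th row starting with `z_{i,i}`. -/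
def rankPBW (p n : ℕ) (x : Fin p × Fin n) : ℕ :=
  (x.1 : ℕ) * n + ((x.2 : ℕ) + n - (x.1 : ℕ)) % n
/-- The poset `Q`: elements `q_{i,j}` with `1 ≤ i ≤ p` and `p+1 ≤ j ≤ n`. -/
abbrev Qfin (p n : ℕ) := {x : ℕ × ℕ // 1 ≤ x.1 ∧ x.1 ≤ p ∧ p + 1 ≤ x.2 ∧ x.2 ≤ n}

/-- The order on `Q`: `q_{i₁,j₁} ⪯ q_{i₂,j₂}` iff `i₁ ≤ i₂` and `j₁ ≤ j₂`. -/
def qleF (p n : ℕ) (a b : Qfin p n) : Prop :=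
  a.val.1 ≤ b.val.1 ∧ a.val.2 ≤ b.val.2

/-- The order ideal `φ_pbw(I)` of `Q`: for a PBW tuple `α` it is the order ideal
generated by the antichain `L = {q_{j,α_j} : α_j > p}` (i.e. the unique order ideal
whose set of maximal elements is `L`). -/
def phiPBWset (p n : ℕ) (α : Fin p → Fin n) : Set (Qfin p n) :=
  {q | ∃ j : Fin p, p ≤ (α j : ℕ) ∧ q.val.1 ≤ (j : ℕ) + 1 ∧ q.val.2 ≤ (α j : ℕ) + 1}

/-- The generator `s · y^{v_{∅,Q}(J)}` of the generalized Hibi ring `A_{∅,Q}(Q,≺)`: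
here `v_{∅,Q}(J)` is the indicator vector of the set of maximal elements of `J`. -/
def genQ (p n : ℕ) (J : Finset (Qfin p n)) : MvPolynomial (Option (Qfin p n)) ℂ :=
  monomial (Finsupp.single (none : Option (Qfin p n)) 1 +
    ∑ q ∈ J, if (∀ q' ∈ J, ¬ (qleF p n q q' ∧ q ≠ q'))
      then Finsupp.single (some q) 1 else 0) 1

/-- The generalized Hibi ring `A_{∅,Q}(Q,≺)`. -/
def hibiQ (p n : ℕ) : Subalgebra ℂ (MvPolynomial (Option (Qfin p n)) ℂ) :=
  Algebra.adjoin ℂ {f | ∃ J : Finset (Qfin p n),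
    (∀ a ∈ J, ∀ b, qleF p n b a → b ∈ J) ∧ f = genQ p n J}

/-- The row index of `q_{i,j} ∈ Q` as an element of `Fin p`. -/
def rowOf (p n : ℕ) (q : Qfin p n) : Fin p :=
  ⟨q.val.1 - 1, by obtain ⟨h1, h2, h3, h4⟩ := q.property; omega⟩

/-- The column index of `q_{i,j} ∈ Q` as an element of `Fin n`. -/
def colOf (p n : ℕ) (q : Qfin p n) : Fin n :=
  ⟨q.val.2 - 1, by obtain ⟨h1, h2, h3, h4⟩ := q.property; omega⟩

/-- The row index of `q_{i,j} ∈ Q` viewed as a column index (for `z_{i,i}`). -/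
def diagColOf (p n : ℕ) (q : Qfin p n) : Fin n :=
  ⟨q.val.1 - 1, by obtain ⟨h1, h2, h3, h4⟩ := q.property; omega⟩

/-!
Adding one common row `v` to all rows of the generic matrix turns a minor into a polynomial of
degree at most one in `v`. Take the leading exponent `m` of an element of `𝒫`, and a chain of
positions, each column coming before the next one in the cyclic order of the later row. The exponent
obtained by moving the part of `m` on the chain to the new row occurs with the coefficient of `m`,
so the entries of `m` on a chain sum to at most the common row sum `k` of `m`. These inequalities
force `m` to vanish off the diagonal of the left `p × p` block, and on `Q` they say that every chain
of `Q` has weight at most `k`. Hence the restriction of `m` to `Q` is a sum of indicators of `k`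
antichains, and `m` is the exponent of a product of `k` monomials `in(D_I)` with `I` a PBW tuple.
Therefore `in(𝒫)` is generated by these monomials, whose exponents are determined by their row sum
and their restriction to `Q`; recording just these data is the isomorphism with the Hibi ring.
-/

section LeadingExponent

variable {σ R : Type*} [CommSemiring R]

/-- `m` is the leading exponent of `f` with respect to the strict monomial order `lt`. -/
def IsLeadingExponent (lt : (σ →₀ ℕ) → (σ →₀ ℕ) → Prop) (f : MvPolynomial σ R) (m : σ →₀ ℕ) :
    Prop :=
  m ∈ f.support ∧ ∀ m' ∈ f.support, m' ≠ m → lt m' m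

theorem IsLeadingExponent.initTerm_eq {lt : (σ →₀ ℕ) → (σ →₀ ℕ) → Prop}
    (hlt : ∀ a b, lt a b → ¬ lt b a) {f : MvPolynomial σ ℂ} {m : σ →₀ ℕ}
    (hm : IsLeadingExponent lt f m) : initTerm lt f = monomial m (coeff m f) := by
  have hex : ∃ m, m ∈ f.support ∧ ∀ m' ∈ f.support, m' ≠ m → lt m' m := ⟨m, hm⟩
  have hchoose : hex.choose = m := by
    by_contra hne
    exact hlt _ _ (hm.2 _ hex.choose_spec.1 hne) (hex.choose_spec.2 m hm.1 (Ne.symm hne))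
  rw [initTerm, dif_pos hex, hchoose]

theorem initTerm_eq_zero_or_exists_isLeadingExponent (lt : (σ →₀ ℕ) → (σ →₀ ℕ) → Prop)
    (f : MvPolynomial σ ℂ) :
    initTerm lt f = 0 ∨
      ∃ m, IsLeadingExponent lt f m ∧ initTerm lt f = monomial m (coeff m f) := by
  by_cases hex : ∃ m, m ∈ f.support ∧ ∀ m' ∈ f.support, m' ≠ m → lt m' m
  · exact .inr ⟨hex.choose, hex.choose_spec, by rw [initTerm, dif_pos hex]⟩
  · exact .inl (by rw [initTerm, dif_neg hex])

theorem degRevLex_asymm {rank : σ → ℕ} (hrank : Function.Injective rank) (a b : σ →₀ ℕ)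
    (hab : degRevLex rank a b) : ¬ degRevLex rank b a := by
  rintro (hdeg | ⟨hdeg, j, hj, hj_last⟩)
  · rcases hab with h | ⟨h, -⟩ <;> omega
  · rcases hab with h | ⟨-, i, hi, hi_last⟩
    · omega
    · rcases lt_trichotomy (rank i) (rank j) with h | h | h
      · have := hi_last j h; omega
      · obtain rfl := hrank h; omega
      · have := hj_last i h; omega

theorem degRevLex_iff_degree {rank : σ → ℕ} {a b : σ →₀ ℕ} :
    degRevLex rank a b ↔ a.degree < b.degree ∨
      a.degree = b.degree ∧ ∃ i, b i < a i ∧ ∀ j, rank i < rank j → a j = b j :=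
  Iff.rfl

theorem degRevLex_add_left {rank : σ → ℕ} {a b : σ →₀ ℕ} (c : σ →₀ ℕ)
    (hab : degRevLex rank a b) : degRevLex rank (c + a) (c + b) := by
  simpa only [degRevLex_iff_degree, map_add, Finsupp.add_apply, add_lt_add_iff_left,
    add_right_inj] using hab

end LeadingExponent

section SupportedSubalgebra

variable {σ : Type*} (R : Type*) [CommSemiring R]

/-- The polynomials all of whose exponents lie in the additive submonoid `S`. -/
def supportedSubalgebra (S : AddSubmonoid (σ →₀ ℕ)) : Subalgebra R (MvPolynomial σ R) where
  carrier := {f | ∀ m ∈ f.support, m ∈ S}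
  add_mem' {f g} hf hg m hm :=
    (Finset.mem_union.mp (support_add hm)).elim (hf m) (hg m)
  mul_mem' {f g} hf hg m hm := by
    obtain ⟨a, ha, b, hb, rfl⟩ := Finset.mem_add.mp (support_mul f g hm)
    exact S.add_mem (hf a ha) (hg b hb)
  algebraMap_mem' r m hm := by
    obtain rfl : m = 0 := Finset.mem_singleton.mp (support_monomial_subset hm)
    exact S.zero_mem

variable {R}

theorem monomial_mem_supportedSubalgebra {S : AddSubmonoid (σ →₀ ℕ)} {m : σ →₀ ℕ} (hm : m ∈ S)
    (r : R) : monomial m r ∈ supportedSubalgebra R S := fun m' hm' => by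
  rwa [Finset.mem_singleton.mp (support_monomial_subset hm')]

end SupportedSubalgebra

section MonomialMap

variable {σ τ : Type*} (R : Type*) [CommSemiring R]

/-- The algebra homomorphism between polynomial rings that applies `φ` to the exponents of all
monomials. -/
def monomialMap (φ : (σ →₀ ℕ) →+ (τ →₀ ℕ)) :
    MvPolynomial σ R →ₐ[R] MvPolynomial τ R :=
  AddMonoidAlgebra.mapDomainAlgHom R R φ

variable {R}

theorem monomialMap_monomial (φ : (σ →₀ ℕ) →+ (τ →₀ ℕ)) (m : σ →₀ ℕ) (r : R) :
    monomialMap R φ (monomial m r) = monomial (φ m) r :=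
  AddMonoidAlgebra.mapDomain_single

theorem injOn_monomialMap {φ : (σ →₀ ℕ) →+ (τ →₀ ℕ)} {S : AddSubmonoid (σ →₀ ℕ)}
    (hφ : Set.InjOn φ S) : Set.InjOn (monomialMap R φ) (supportedSubalgebra R S) := by
  intro f hf g hg h
  exact AddMonoidAlgebra.coeff_injective (Finsupp.mapDomain_injOn (S : Set (σ →₀ ℕ)) hφ hf hg
    (congrArg AddMonoidAlgebra.coeff h))

theorem exists_algEquiv_of_injOn {A B : Type*} [Semiring A] [Semiring B] [Algebra R A] [Algebra R B]
    (f : A →ₐ[R] B) {S : Subalgebra R A} {T : Subalgebra R B} (hf : Set.InjOn f S)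
    (hST : S.map f = T) : ∃ e : S ≃ₐ[R] T, ∀ x, (e x : B) = f x :=
  ⟨(AlgEquiv.ofInjective (f.comp S.val) hf.injective).trans
    (Subalgebra.equivOfEq _ _ ((S.range_comp_val f).trans hST)), fun _ => rfl⟩

end MonomialMap

theorem exists_lt_of_sum_eq_of_lt {ι : Type*} {s : Finset ι} {f g : ι → ℕ}
    (hsum : ∑ i ∈ s, f i = ∑ i ∈ s, g i) {i : ι} (hi : i ∈ s) (hlt : f i < g i) :
    ∃ j ∈ s, g j < f j := by
  by_contra! hle
  exact (Finset.sum_lt_sum hle ⟨i, hi, hlt⟩).ne hsum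

section RowMajor

variable (ι κ : Type*)

/-- The additive monoid of exponents all of whose row sums are equal. -/
def equalRowSums [Fintype κ] : AddSubmonoid (ι × κ →₀ ℕ) where
  carrier := {m | ∀ i j, ∑ c, m (i, c) = ∑ c, m (j, c)}
  add_mem' {a b} ha hb i j := by
    simp only [Finsupp.add_apply, Finset.sum_add_distrib, ha i j, hb i j]
  zero_mem' _ _ := rfl

variable {ι κ}

theorem degree_eq_sum_rows [Fintype ι] [Fintype κ] (m : ι × κ →₀ ℕ) :
    m.degree = ∑ i, ∑ c, m (i, c) := by
  rw [Finsupp.degree_eq_sum, Fintype.sum_prod_type]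

theorem degree_of_mem_equalRowSums [Fintype ι] [Fintype κ] {m : ι × κ →₀ ℕ}
    (hm : m ∈ equalRowSums ι κ) (i : ι) : m.degree = Fintype.card ι * ∑ c, m (i, c) := by
  simp only [degree_eq_sum_rows, fun j => hm j i, Finset.sum_const, Finset.card_univ, smul_eq_mul]

/-- `m` and `m'` have the same row sums and the same column sums. -/
def SameMarginals [Fintype ι] [Fintype κ] (m m' : ι × κ →₀ ℕ) : Prop :=
  (∀ i, ∑ c, m (i, c) = ∑ c, m' (i, c)) ∧ ∀ c, ∑ i, m (i, c) = ∑ i, m' (i, c)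

/-- An injective ranking of the positions of a matrix that lists the rows one after another. -/
structure IsRowMajor [LT ι] (rank : ι × κ → ℕ) : Prop where
  injective : Function.Injective rank
  lt_of_row_lt : ∀ {x y : ι × κ}, x.1 < y.1 → rank x < rank y

/-- Whenever `x` lies in a higher row than `y`, the column of `x` comes before the column of `y` in
the row of `y`. -/
def IsRankChain [LT ι] (rank : ι × κ → ℕ) (C : Set (ι × κ)) : Prop :=
  ∀ x ∈ C, ∀ y ∈ C, x.1 < y.1 → rank (y.1, x.2) ≤ rank y

/-- Whenever `x` lies in a higher row than `y`, the column of `x` comes after the column of `y` in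
the row of `y`. -/
def IsRankAntichain [LT ι] (rank : ι × κ → ℕ) (C : Set (ι × κ)) : Prop :=
  ∀ x ∈ C, ∀ y ∈ C, x.1 < y.1 → rank y ≤ rank (y.1, x.2)

variable [Fintype ι] [Fintype κ] [LinearOrder ι] {rank : ι × κ → ℕ} {e e' : ι × κ →₀ ℕ}

/- At the last position `(i, c)` where the exponents differ, equality of the marginals forces
compensating differences, all at earlier positions. -/
theorem SameMarginals.degRevLex_or_exists_exchange (hrank : IsRowMajor rank)
    (h : SameMarginals e e') (hne : e ≠ e') :
    degRevLex rank e e' ∨ ∃ i j j' c d, rank (i, d) < rank (i, c) ∧ j < i ∧ j' < i ∧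
      e (i, d) ≠ 0 ∧ e (j, c) ≠ 0 ∧ e' (i, c) ≠ 0 ∧ e' (j', d) ≠ 0 := by
  obtain ⟨x, hx, hx_last⟩ : ∃ x, e x ≠ e' x ∧ ∀ y, rank x < rank y → e y = e' y := by
    obtain ⟨x, hx, hmax⟩ := Finset.exists_max_image (Finset.univ.filter fun x => e x ≠ e' x) rank
      (by simpa only [Finset.filter_nonempty_iff, Finset.mem_univ, true_and] using
        DFunLike.ne_iff.mp hne)
    exact ⟨x, (Finset.mem_filter.mp hx).2, fun y hy => by
      by_contra hye
      exact (hmax y (by simpa using hye)).not_gt hy⟩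
  have lt_of_ne : ∀ y, e y ≠ e' y → y ≠ x → rank y < rank x := fun y hy hyx =>
    lt_of_le_of_ne (not_lt.mp fun hlt => hy (hx_last y hlt)) (hrank.injective.ne hyx)
  have row_lt_of_ne : ∀ j c', e (j, c') ≠ e' (j, c') → j ≠ x.1 → j < x.1 := fun j c' hy hj =>
    lt_of_le_of_ne (not_lt.mp fun hlt => (hrank.lt_of_row_lt (y := (j, c')) hlt).not_gt <|
      lt_of_ne _ hy fun hyx => hj (congrArg Prod.fst hyx)) hj
  obtain ⟨i, c⟩ := x
  rcases hx.lt_or_gt with hlt | hgt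
  · right
    obtain ⟨d, -, hd⟩ := exists_lt_of_sum_eq_of_lt (h.1 i) (Finset.mem_univ c) hlt
    obtain ⟨j, -, hj⟩ := exists_lt_of_sum_eq_of_lt (h.2 c) (Finset.mem_univ i) hlt
    obtain ⟨j', -, hj'⟩ := exists_lt_of_sum_eq_of_lt (h.2 d).symm (Finset.mem_univ i) hd
    have hdc : (i, d) ≠ (i, c) := fun heq => by rw [heq] at hd; exact hd.not_gt hlt
    have hji : j ≠ i := by rintro rfl; exact hj.not_gt hlt
    have hji' : j' ≠ i := by rintro rfl; exact hj'.not_gt hd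
    exact ⟨i, j, j', c, d, lt_of_ne _ hd.ne' hdc, row_lt_of_ne _ _ hj.ne' hji,
      row_lt_of_ne _ _ hj'.ne hji', hd.ne_bot, hj.ne_bot, hlt.ne_bot, hj'.ne_bot⟩
  · left
    refine .inr ⟨?_, (i, c), hgt, hx_last⟩
    change e.degree = e'.degree
    simp only [degree_eq_sum_rows, h.1]

theorem SameMarginals.degRevLex_of_isRankChain (hrank : IsRowMajor rank) {C : Set (ι × κ)}
    (hC : IsRankChain rank C) (heC : ∀ x, e x ≠ 0 → x ∈ C) (h : SameMarginals e e')
    (hne : e ≠ e') : degRevLex rank e e' := by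
  refine (h.degRevLex_or_exists_exchange hrank hne).resolve_right ?_
  rintro ⟨i, j, -, c, d, hdc, hj, -, hid, hjc, -, -⟩
  exact (hC _ (heC _ hjc) _ (heC _ hid) hj).not_gt hdc

theorem SameMarginals.degRevLex_of_isRankAntichain (hrank : IsRowMajor rank) {C : Set (ι × κ)}
    (hC : IsRankAntichain rank C) (heC : ∀ x, e' x ≠ 0 → x ∈ C) (h : SameMarginals e e')
    (hne : e ≠ e') : degRevLex rank e e' := by
  refine (h.degRevLex_or_exists_exchange hrank hne).resolve_right ?_
  rintro ⟨i, -, j', c, d, hdc, -, hj', -, -, hic, hjd⟩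
  exact (hC _ (heC _ hjd) _ (heC _ hic) hj').not_gt hdc

end RowMajor

section ChainBounded

variable {ι κ : Type*} [Fintype κ]

/-- All row sums of `m` equal `k`, and `m` sums to at most `k` over every rank chain. -/
structure IsChainBounded [LT ι] (rank : ι × κ → ℕ) (m : ι × κ →₀ ℕ) (k : ℕ) : Prop where
  row_sum : ∀ i, ∑ c, m (i, c) = k
  chain_sum_le : ∀ C : Finset (ι × κ), IsRankChain rank (C : Set (ι × κ)) → ∑ x ∈ C, m x ≤ k

/- Otherwise `x` and the support of row `i` form a rank chain whose sum exceeds the row sum. -/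
theorem IsChainBounded.eq_zero_of_row [Preorder ι] {rank : ι × κ → ℕ} {m : ι × κ →₀ ℕ} {k : ℕ}
    (hm : IsChainBounded rank m k) {x : ι × κ} {i : ι} (hxi : x.1 ≠ i)
    (hlt : x.1 < i → ∀ c, m (i, c) ≠ 0 → rank (i, x.2) ≤ rank (i, c))
    (hgt : i < x.1 → ∀ c, m (i, c) ≠ 0 → rank (x.1, c) ≤ rank x) : m x = 0 := by
  let row : Finset (ι × κ) :=
    (Finset.univ.filter fun c => m (i, c) ≠ 0).map (Function.Embedding.sectR i κ)
  have mem_row : ∀ y, y ∈ row ↔ ∃ c, m (i, c) ≠ 0 ∧ (i, c) = y := by simp [row]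
  have hx : x ∉ row := fun h => by
    obtain ⟨c, -, rfl⟩ := (mem_row x).mp h
    exact hxi rfl
  have hrow : ∑ y ∈ row, m y = k := by
    rw [Finset.sum_map, ← hm.row_sum i]
    exact Finset.sum_filter_ne_zero _
  have hchain : IsRankChain rank (insert x row : Finset (ι × κ)) := by
    intro y hy z hz hyz
    rw [Finset.mem_coe, Finset.mem_insert, mem_row] at hy hz
    obtain rfl | ⟨c, hc, rfl⟩ := hy <;> obtain rfl | ⟨d, hd, rfl⟩ := hz
    · exact absurd hyz (lt_irrefl _)
    · exact hlt hyz d hd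
    · exact hgt hyz c hc
    · exact absurd hyz (lt_irrefl _)
  have hle := hm.chain_sum_le _ hchain
  rw [Finset.sum_insert hx, hrow] at hle
  omega

end ChainBounded

section Minors

variable {ι ρ κ : Type*} [Fintype ι]

/-- The exponent of the monomial `∏ i, z_{g i, α i}`. -/
def graphExp (g : ι → ρ) (α : ι → κ) : ρ × κ →₀ ℕ :=
  ∑ i, Finsupp.single (g i, α i) 1

theorem graphExp_apply (g : ι → ρ) (α : ι → κ) (x : ρ × κ) :
    graphExp g α x = ∑ i, if (g i, α i) = x then 1 else 0 := by
  simp only [graphExp, Finsupp.finsetSum_apply, Finsupp.single_apply]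

theorem graphExp_id_apply (α : ι → κ) (i : ι) (c : κ) :
    graphExp id α (i, c) = if α i = c then 1 else 0 := by
  simp only [graphExp_apply, id_eq, Prod.mk.injEq, ite_and, Finset.sum_ite_eq', Finset.mem_univ,
    if_true]

theorem degree_graphExp (g : ι → ρ) (α : ι → κ) : (graphExp g α).degree = Fintype.card ι := by
  simp only [graphExp, map_sum, Finsupp.degree_single, Finset.sum_const, Finset.card_univ,
    smul_eq_mul, mul_one]

theorem sum_row_graphExp [Fintype κ] (g : ι → ρ) (α : ι → κ) (r : ρ) :
    ∑ c, graphExp g α (r, c) = ∑ i, if g i = r then 1 else 0 := by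
  simp only [graphExp_apply, Prod.mk.injEq, ite_and]
  rw [Finset.sum_comm]
  exact Finset.sum_congr rfl fun i _ => by split_ifs <;> simp

theorem sum_row_graphExp_le_one [Fintype κ] {g : ι → ρ} (hg : Function.Injective g) (α : ι → κ)
    (r : ρ) : ∑ c, graphExp g α (r, c) ≤ 1 := by
  rw [sum_row_graphExp, ← Finset.card_filter, Finset.card_le_one]
  intro i hi j hj
  exact hg ((Finset.mem_filter.mp hi).2.trans (Finset.mem_filter.mp hj).2.symm)

theorem sum_column_graphExp [Fintype ρ] (g : ι → ρ) (α : ι → κ) (c : κ) :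
    ∑ r, graphExp g α (r, c) = ∑ i, if α i = c then 1 else 0 := by
  simp only [graphExp_apply, Prod.mk.injEq, ite_and]
  rw [Finset.sum_comm]
  simp only [Finset.sum_ite_eq, Finset.mem_univ, if_true]

theorem sum_row_graphExp_equiv [Fintype κ] (σ : Equiv.Perm ι) (α : ι → κ) (i : ι) :
    ∑ c, graphExp σ α (i, c) = 1 := by
  simp only [sum_row_graphExp, ← σ.eq_symm_apply, Finset.sum_ite_eq', Finset.mem_univ, if_true]

theorem sum_row_graphExp_id [Fintype κ] (α : ι → κ) (i : ι) : ∑ c, graphExp id α (i, c) = 1 :=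
  sum_row_graphExp_equiv 1 α i

theorem graphExp_left_injective {α : ι → κ} (hα : Function.Injective α) :
    Function.Injective fun g : ι → ρ => graphExp g α := by
  intro g g' (h : graphExp g α = graphExp g' α)
  ext i
  have hne : graphExp g' α (g i, α i) ≠ 0 := by
    rw [← h, graphExp_apply]
    exact (Finset.sum_pos' (fun _ _ => Nat.zero_le _) ⟨i, Finset.mem_univ i, by simp⟩).ne'
  rw [graphExp_apply] at hne
  obtain ⟨j, -, hj⟩ := Finset.exists_ne_zero_of_sum_ne_zero hne
  obtain ⟨hg, hji⟩ := Prod.mk.inj (ite_ne_right_iff.mp hj).1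
  rw [← hg, hα hji]

theorem graphExp_perm_mem_equalRowSums [Fintype κ] (σ : Equiv.Perm ι) (α : ι → κ) :
    graphExp σ α ∈ equalRowSums ι κ := fun i j => by
  rw [sum_row_graphExp_equiv, sum_row_graphExp_equiv]

theorem sameMarginals_graphExp_perm [Fintype κ] (σ τ : Equiv.Perm ι) (α : ι → κ) :
    SameMarginals (graphExp σ α) (graphExp τ α) :=
  ⟨fun i => by rw [sum_row_graphExp_equiv, sum_row_graphExp_equiv],
    fun c => by rw [sum_column_graphExp, sum_column_graphExp]⟩

variable (R : Type*) [CommRing R]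

/-- The determinant of the rows `g` and the columns `α` of the generic `ρ × κ` matrix. -/
def genericMinor (g : ι → ρ) (α : ι → κ) : MvPolynomial (ρ × κ) R :=
  ((Matrix.mvPolynomialX ρ κ R).submatrix g α).det

theorem genericMinor_eq_sum (g : ι → ρ) (α : ι → κ) :
    genericMinor R g α =
      ∑ σ : Equiv.Perm ι, monomial (graphExp (g ∘ σ) α) ((Equiv.Perm.sign σ : ℤ) : R) := by
  simp only [genericMinor, Matrix.det_apply', Matrix.submatrix_apply, Matrix.mvPolynomialX_apply]
  refine Finset.sum_congr rfl fun σ _ => ?_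
  rw [graphExp, monomial_sum_index]
  simp [X]

variable {R}

theorem exists_perm_of_mem_support_genericMinor {g : ι → ρ} {α : ι → κ} {m : ρ × κ →₀ ℕ}
    (hm : m ∈ (genericMinor R g α).support) : ∃ σ : Equiv.Perm ι, m = graphExp (g ∘ σ) α := by
  rw [genericMinor_eq_sum] at hm
  obtain ⟨σ, -, hσ⟩ := Finset.mem_biUnion.mp (support_sum hm)
  exact ⟨σ, Finset.mem_singleton.mp (support_monomial_subset hσ)⟩

theorem coeff_genericMinor_id (α : ι → κ) (hα : Function.Injective α) :
    coeff (graphExp id α) (genericMinor R id α) = 1 := by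
  rw [genericMinor_eq_sum, coeff_sum, Finset.sum_eq_single 1]
  · simp
  · intro σ _ hσ
    rw [coeff_monomial]
    exact if_neg fun h => hσ (DFunLike.coe_injective (graphExp_left_injective hα h))
  · simp

theorem isLeadingExponent_genericMinor [Nontrivial R] [LinearOrder ι] [Finite κ]
    {rank : ι × κ → ℕ} (hrank : IsRowMajor rank)
    {α : ι → κ} (hα : Function.Injective α)
    (hα' : IsRankAntichain rank (Set.range fun i => (i, α i))) :
    IsLeadingExponent (degRevLex rank) (genericMinor R id α) (graphExp id α) := by
  cases nonempty_fintype κ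
  refine ⟨by simp [coeff_genericMinor_id α hα], fun m hm hne => ?_⟩
  obtain ⟨σ, rfl⟩ := exists_perm_of_mem_support_genericMinor hm
  refine (sameMarginals_graphExp_perm σ 1 α).degRevLex_of_isRankAntichain hrank hα' ?_ hne
  rintro ⟨i, c⟩ hic
  simp only [graphExp_id_apply, ne_eq, ite_eq_right_iff, one_ne_zero] at hic
  exact ⟨i, by simpa using hic⟩

end Minors

section CommonRow

variable (ι κ R : Type*) [CommRing R]

/-- The substitution `z_{i,c} ↦ z_{i,c} + v_c` adding one common row `v` of new variables to every
row of the generic matrix; `v` is indexed by `none`. -/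
def addCommonRow : MvPolynomial (ι × κ) R →ₐ[R] MvPolynomial (Option ι × κ) R :=
  aeval fun x => X (some x.1, x.2) + X (none, x.2)

/-- The exponents `m` whose degree in the variables `(none, c)` is at most `m.degree / d`. -/
def commonRowBound [Fintype κ] (d : ℕ) : AddSubmonoid (Option ι × κ →₀ ℕ) where
  carrier := {m | d * ∑ c, m (none, c) ≤ m.degree}
  add_mem' {a b} (ha : _ ≤ _) (hb : _ ≤ _) := by
    simpa only [Set.mem_ofPred_eq, Finsupp.add_apply, Finset.sum_add_distrib, mul_add, map_add]
      using add_le_add ha hb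
  zero_mem' := by simp

variable {ι κ R}

theorem mem_commonRowBound [Fintype κ] {d : ℕ} {m : Option ι × κ →₀ ℕ} :
    m ∈ commonRowBound ι κ d ↔ d * ∑ c, m (none, c) ≤ m.degree :=
  Iff.rfl

theorem genericMinor_eq_zero_of_not_injective {ρ : Type*} [Fintype ι] {g : ι → ρ} (α : ι → κ)
    (hg : ¬ Function.Injective g) : genericMinor R g α = 0 := by
  obtain ⟨i, j, hij, hne⟩ := Function.not_injective_iff.mp hg
  exact Matrix.det_zero_of_row_eq hne (by ext; simp [hij])

/- Expand the determinant of `z + v` multilinearly in the rows. -/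
theorem addCommonRow_genericMinor [Fintype ι] (α : ι → κ) :
    addCommonRow ι κ R (genericMinor R id α) =
      ∑ s : Finset ι, genericMinor R (s.piecewise some fun _ => none) α := by
  have hmap : (addCommonRow ι κ R).mapMatrix ((Matrix.mvPolynomialX ι κ R).submatrix id α) =
      (Matrix.mvPolynomialX (Option ι) κ R).submatrix some α +
        (Matrix.mvPolynomialX (Option ι) κ R).submatrix (fun _ => none) α := by
    ext1 i j
    simp [addCommonRow]
  rw [genericMinor, AlgHom.map_det, hmap]
  refine (Matrix.detRowAlternating.toMultilinearMap.map_add_univ _ _).trans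
    (Finset.sum_congr rfl fun s _ => congrArg Matrix.det ?_)
  ext1 i j
  by_cases hi : i ∈ s <;> simp [Finset.piecewise, hi]

theorem addCommonRow_genericMinor_mem [Fintype ι] [Fintype κ] (α : ι → κ) :
    addCommonRow ι κ R (genericMinor R id α) ∈
      supportedSubalgebra R (commonRowBound ι κ (Fintype.card ι)) := by
  rw [addCommonRow_genericMinor]
  refine Subalgebra.sum_mem _ fun s _ => ?_
  by_cases hinj : Function.Injective (s.piecewise some fun _ => none : ι → Option ι)
  · intro m hm
    obtain ⟨σ, rfl⟩ := exists_perm_of_mem_support_genericMinor hm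
    rw [mem_commonRowBound, degree_graphExp]
    exact mul_le_of_le_one_right' (sum_row_graphExp_le_one (hinj.comp σ.injective) α none)
  · rw [genericMinor_eq_zero_of_not_injective α hinj]
    exact Subalgebra.zero_mem _

end CommonRow

section Binomial

variable {σ τ R : Type*} [Fintype σ] [CommSemiring R]

theorem aeval_X_add_X_monomial (f g : σ → τ) (m : σ →₀ ℕ) (r : R) :
    aeval (fun x => X (f x) + X (g x) : σ → MvPolynomial τ R) (monomial m r) =
      ∑ q ∈ Finset.HasAntidiagonal.antidiagonal m,
        monomial (Finsupp.mapDomain f q.1 + Finsupp.mapDomain g q.2)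
          (r * ∏ x, ((m x).choose (q.1 x) : R)) := by
  have hterm : ∀ q : σ → ℕ × ℕ,
      C r * ∏ x, (m x).choose (q x).1 • (X (f x) ^ (q x).1 * X (g x) ^ (q x).2) =
        monomial (∑ x, Finsupp.single (f x) (q x).1 + ∑ x, Finsupp.single (g x) (q x).2)
          (r * ∏ x, ((m x).choose (q x).1 : R)) := fun q => by
    rw [← Finset.sum_add_distrib, monomial_sum_index, map_mul, map_prod, mul_assoc,
      ← Finset.prod_mul_distrib]
    simp only [X_pow_eq_monomial, monomial_mul, nsmul_eq_mul, map_natCast, mul_one]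
  rw [aeval_monomial, Finsupp.prod_fintype _ _ fun _ => pow_zero _]
  simp only [fun x => (Commute.all (X (f x) : MvPolynomial τ R) (X (g x))).add_pow' (m x),
    Finset.prod_univ_sum, Finset.mul_sum, algebraMap_eq, hterm]
  refine Finset.sum_bij'
    (fun q _ => (Finsupp.equivFunOnFinite.symm fun x => (q x).1,
      Finsupp.equivFunOnFinite.symm fun x => (q x).2))
    (fun q _ x => (q.1 x, q.2 x)) ?_ ?_ ?_ ?_ ?_
  · simp [DFunLike.ext_iff]
  · simp [DFunLike.ext_iff]
  · simp
  · simp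
  · simp [Finsupp.mapDomain, Finsupp.sum_fintype]

theorem coeff_aeval_X_add_X_of_unique {f g : σ → τ} {F : MvPolynomial σ R} {a b : σ →₀ ℕ}
    (huniq : ∀ a' b', a' + b' ∈ F.support → Finsupp.mapDomain f a' + Finsupp.mapDomain g b' =
      Finsupp.mapDomain f a + Finsupp.mapDomain g b → a' = a ∧ b' = b) :
    coeff (Finsupp.mapDomain f a + Finsupp.mapDomain g b)
        (aeval (fun x => X (f x) + X (g x) : σ → MvPolynomial τ R) F) =
      coeff (a + b) F * ∏ x, ((a x + b x).choose (a x) : R) := by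
  conv_lhs => rw [F.as_sum]
  simp only [map_sum, aeval_X_add_X_monomial, coeff_sum, coeff_monomial, Finset.sum_sigma']
  rw [Finset.sum_eq_single ⟨a + b, a, b⟩]
  · simp
  · rintro ⟨m, a', b'⟩ hmem hne
    obtain ⟨hm, hab⟩ := Finset.mem_sigma.mp hmem
    obtain rfl : a' + b' = m := Finset.HasAntidiagonal.mem_antidiagonal.mp hab
    refine if_neg fun heq => hne ?_
    obtain ⟨rfl, rfl⟩ := huniq a' b' hm heq
    rfl
  · intro hnot
    have : a + b ∉ F.support := fun h => hnot <| Finset.mem_sigma.mpr ⟨h, by simp⟩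
    simp [notMem_support_iff.mp this]

end Binomial

section ChainBound

variable {ι κ : Type*}

/-- The exponent contributed to the expansion of `addCommonRow` by choosing the old variables
according to `a` and the new ones according to `b`. -/
def commonRowExp (a b : ι × κ →₀ ℕ) : Option ι × κ →₀ ℕ :=
  Finsupp.mapDomain (fun x => (some x.1, x.2)) a + Finsupp.mapDomain (fun x => (none, x.2)) b

theorem degree_commonRowExp (a b : ι × κ →₀ ℕ) : (commonRowExp a b).degree = (a + b).degree := by
  simp only [commonRowExp, map_add, Finsupp.degree_mapDomain]

theorem commonRowExp_some (a b : ι × κ →₀ ℕ) (i : ι) (c : κ) :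
    commonRowExp a b (some i, c) = a (i, c) := by
  have hinj : Function.Injective fun x : ι × κ => (some x.1, x.2) :=
    (Option.some_injective ι).prodMap Function.injective_id
  have hnone : (some i, c) ∉ Set.range fun x : ι × κ => (none, x.2) := by simp
  rw [commonRowExp, Finsupp.add_apply, Finsupp.mapDomain_of_notMem_range _ _ hnone, add_zero]
  exact Finsupp.mapDomain_apply hinj a (i, c)

theorem commonRowExp_none [Fintype ι] [Finite κ] (a b : ι × κ →₀ ℕ) (c : κ) :
    commonRowExp a b (none, c) = ∑ i, b (i, c) := by
  cases nonempty_fintype κ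
  simp [commonRowExp, Finsupp.mapDomain, Finsupp.sum_fintype, Finsupp.single_apply,
    Fintype.sum_prod_type]

theorem eq_and_sameMarginals_of_commonRowExp_eq [Fintype ι] [Fintype κ] {a b a' b' : ι × κ →₀ ℕ}
    (hab : a + b ∈ equalRowSums ι κ) (hab' : a' + b' ∈ equalRowSums ι κ)
    (h : commonRowExp a' b' = commonRowExp a b) : a' = a ∧ SameMarginals b b' := by
  obtain rfl : a' = a := by
    ext ⟨i, c⟩
    rw [← commonRowExp_some a' b', h, commonRowExp_some]
  refine ⟨rfl, fun i => ?_, fun c => by rw [← commonRowExp_none a', ← h, commonRowExp_none]⟩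
  have hdeg : (a' + b).degree = (a' + b').degree := by
    rw [← degree_commonRowExp, ← degree_commonRowExp, h]
  rw [degree_of_mem_equalRowSums hab i, degree_of_mem_equalRowSums hab' i] at hdeg
  simpa [Finset.sum_add_distrib] using
    Nat.eq_of_mul_eq_mul_left (Fintype.card_pos_iff.mpr ⟨i⟩) hdeg

variable [Fintype κ] [LinearOrder ι] {R : Type*} [CommRing R] {rank : ι × κ → ℕ}
  {F : MvPolynomial (ι × κ) R} {m : ι × κ →₀ ℕ}

/- The coefficient of `addCommonRow F` at the exponent that moves exactly the part of `m` on `C` to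
the new row is the coefficient of `m` in `F`: any other contribution comes from an exponent larger
than `m`. -/
theorem IsLeadingExponent.coeff_addCommonRow [Finite ι] (hrank : IsRowMajor rank)
    (hm : IsLeadingExponent (degRevLex rank) F m)
    (hF : F ∈ supportedSubalgebra R (equalRowSums ι κ))
    {C : Finset (ι × κ)} (hC : IsRankChain rank (C : Set (ι × κ))) :
    coeff (commonRowExp (m.filter (· ∉ C)) (m.filter (· ∈ C))) (addCommonRow ι κ R F) =
      coeff m F := by
  cases nonempty_fintype ι
  set a := m.filter (· ∉ C) with ha
  set b := m.filter (· ∈ C) with hb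
  have hab : a + b = m := by rw [add_comm]; exact Finsupp.filter_add_filter_not m (· ∈ C)
  have huniq : ∀ a' b', a' + b' ∈ F.support → commonRowExp a' b' = commonRowExp a b →
      a' = a ∧ b' = b := by
    intro a' b' hmem heq
    obtain ⟨ha', hmarg⟩ :=
      eq_and_sameMarginals_of_commonRowExp_eq (hF _ (hab ▸ hm.1)) (hF _ hmem) heq
    refine ⟨ha', by_contra fun hne => ?_⟩
    have hlt : degRevLex rank m (a' + b') := by
      rw [← hab, ha']
      exact degRevLex_add_left a <| hmarg.degRevLex_of_isRankChain hrank hC (fun x hx => by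
        by_contra hxC; exact hx (Finsupp.filter_apply_neg _ _ hxC)) (Ne.symm hne)
    refine degRevLex_asymm hrank.injective _ _ hlt (hm.2 _ hmem fun h => hne ?_)
    exact add_left_cancel ((ha' ▸ h).trans hab.symm)
  have hchoose : ∀ x, (a x + b x).choose (a x) = 1 := fun x => by
    by_cases hx : x ∈ C <;> simp [ha, hb, hx]
  rw [commonRowExp, addCommonRow, coeff_aeval_X_add_X_of_unique huniq, hab]
  simp [hchoose]

theorem IsLeadingExponent.card_mul_sum_le_degree [Finite ι] (hrank : IsRowMajor rank)
    (hm : IsLeadingExponent (degRevLex rank) F m)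
    (hF : F ∈ supportedSubalgebra R (equalRowSums ι κ)) {d : ℕ}
    (hF' : addCommonRow ι κ R F ∈ supportedSubalgebra R (commonRowBound ι κ d))
    {C : Finset (ι × κ)} (hC : IsRankChain rank (C : Set (ι × κ))) :
    d * ∑ x ∈ C, m x ≤ m.degree := by
  cases nonempty_fintype ι
  have hmem := mem_commonRowBound.mp <| hF' _ <| mem_support_iff.mpr <|
    (hm.coeff_addCommonRow hrank hF hC).trans_ne (mem_support_iff.mp hm.1)
  rw [degree_commonRowExp, add_comm, Finsupp.filter_add_filter_not] at hmem
  simp only [commonRowExp_none] at hmem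
  rw [Finset.sum_comm, ← Fintype.sum_prod_type'] at hmem
  simpa only [Finsupp.filter_apply, Finset.sum_ite_mem, Finset.univ_inter] using hmem

theorem IsLeadingExponent.isChainBounded [Fintype ι] (hrank : IsRowMajor rank)
    (hm : IsLeadingExponent (degRevLex rank) F m)
    (hF : F ∈ supportedSubalgebra R (equalRowSums ι κ))
    (hF' : addCommonRow ι κ R F ∈ supportedSubalgebra R (commonRowBound ι κ (Fintype.card ι)))
    (i : ι) : IsChainBounded rank m (∑ c, m (i, c)) where
  row_sum j := hF m hm.1 j i
  chain_sum_le C hC := by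
    have hle := hm.card_mul_sum_le_degree hrank hF hF' hC
    rw [degree_of_mem_equalRowSums (hF m hm.1) i] at hle
    exact Nat.le_of_mul_le_mul_left hle (Fintype.card_pos_iff.mpr ⟨i⟩)

end ChainBound

section PBWOrder

variable {p n : ℕ} (hpn : p ≤ n)

include hpn in
theorem rankPBW_eq (i : Fin p) (c : Fin n) :
    rankPBW p n (i, c) = i * n + if (i : ℕ) ≤ c then (c : ℕ) - i else c + n - i := by
  have := i.2
  have := c.2
  simp only [rankPBW]
  split_ifs with h
  · rw [show (c : ℕ) + n - i = (c - i) + n by omega, Nat.add_mod_right, Nat.mod_eq_of_lt (by omega)]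
  · rw [Nat.mod_eq_of_lt (by omega)]

theorem rankPBW_lt_of_row_lt {x y : Fin p × Fin n} (hxy : x.1 < y.1) :
    rankPBW p n x < rankPBW p n y :=
  calc rankPBW p n x < (x.1 + 1) * n := by
        rw [rankPBW, add_one_mul]
        exact Nat.add_lt_add_left (Nat.mod_lt _ x.2.pos) _
    _ ≤ y.1 * n := Nat.mul_le_mul_right n hxy
    _ ≤ rankPBW p n y := Nat.le_add_right _ _

include hpn in
theorem isRowMajor_rankPBW : IsRowMajor (rankPBW p n) where
  lt_of_row_lt := rankPBW_lt_of_row_lt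
  injective := by
    rintro ⟨i, c⟩ ⟨j, d⟩ h
    obtain rfl : i = j := by
      by_contra hij
      rcases lt_or_gt_of_ne hij with hij | hij
      · exact (rankPBW_lt_of_row_lt (x := (i, c)) (y := (j, d)) hij).ne h
      · exact (rankPBW_lt_of_row_lt (x := (j, d)) (y := (i, c)) hij).ne' h
    rw [rankPBW_eq hpn, rankPBW_eq hpn] at h
    have := i.2
    rw [Prod.mk.injEq, Fin.ext_iff (a := c)]
    split_ifs at h <;> omega

include hpn in
theorem IsPBW.isRankAntichain {α : Fin p → Fin n} (hα : IsPBW p n α) :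
    IsRankAntichain (rankPBW p n) (Set.range fun i => (i, α i)) := by
  obtain ⟨-, hdiag, hdec⟩ := hα
  rintro _ ⟨k, rfl⟩ _ ⟨l, rfl⟩ (hkl : k < l)
  have hl := hdiag l
  have hk := hdiag k
  have hlk : p ≤ (α k : ℕ) → ¬ ((α k : ℕ) < α l) := fun h h' => (hdec l k h h').not_gt hkl
  simp only [rankPBW_eq hpn]
  split_ifs <;> omega

variable {m : Fin p × Fin n →₀ ℕ} {k : ℕ}

include hpn in
theorem IsChainBounded.eq_zero_of_row_lt_column (hm : IsChainBounded (rankPBW p n) m k)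
    {i : Fin p} {d : Fin n} (hid : (i : ℕ) < d) (hd : (d : ℕ) < p) : m (i, d) = 0 := by
  refine hm.eq_zero_of_row (i := ⟨d, hd⟩) (Fin.ne_of_lt hid) (fun _ c _ => ?_)
    fun h => absurd h (not_lt.mpr hid.le)
  simp only [rankPBW_eq hpn]
  split_ifs <;> omega

include hpn in
theorem IsChainBounded.eq_zero_of_column_lt_row (hm : IsChainBounded (rankPBW p n) m k)
    {i : Fin p} {d : Fin n} (hdi : (d : ℕ) < i) : m (i, d) = 0 := by
  refine hm.eq_zero_of_row (i := ⟨d, by omega⟩) (Fin.ne_of_gt hdi)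
    (fun h => absurd h (not_lt.mpr hdi.le)) fun _ c hc => ?_
  have hc_range : (c : ℕ) ≤ d ∨ p ≤ c := by
    by_contra! h
    exact hc (hm.eq_zero_of_row_lt_column hpn h.1 h.2)
  simp only [rankPBW_eq hpn]
  split_ifs <;> omega

end PBWOrder

section AntichainDecomposition

variable {P : Type*} [PartialOrder P] [Finite P]

/-- The maximal elements of the support of a weight function on a finite poset. -/
def maxSupport (w : P → ℕ) : Finset P :=
  (Set.toFinite {x | Maximal (fun y => w y ≠ 0) x}).toFinset

theorem mem_maxSupport {w : P → ℕ} {x : P} :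
    x ∈ maxSupport w ↔ Maximal (fun y => w y ≠ 0) x :=
  Set.Finite.mem_toFinset _

theorem isAntichain_maxSupport (w : P → ℕ) : IsAntichain (· ≤ ·) (maxSupport w : Set P) :=
  (setOfPred_maximal_antichain fun y => w y ≠ 0).subset fun _ hx => mem_maxSupport.mp hx

/- A chain of positive weight missing `maxSupport w` can be extended by an element of it. -/
theorem sum_lt_of_disjoint_maxSupport {w : P → ℕ} {k : ℕ} (hk : 0 < k)
    (hw : ∀ C : Finset P, IsChain (· ≤ ·) (C : Set P) → ∑ x ∈ C, w x ≤ k) {C : Finset P}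
    (hC : IsChain (· ≤ ·) (C : Set P)) (hdisj : ∀ x ∈ C, x ∉ maxSupport w) :
    ∑ x ∈ C, w x < k := by
  set C' := C.filter fun x => w x ≠ 0
  have hsum : ∑ x ∈ C', w x = ∑ x ∈ C, w x := Finset.sum_filter_ne_zero C
  rcases C'.eq_empty_or_nonempty with hempty | hne
  · rwa [← hsum, hempty, Finset.sum_empty]
  have hchain : IsChain (· ≤ ·) (C' : Set P) := hC.mono (Finset.coe_subset.mpr (C.filter_subset _))
  obtain ⟨x, hx⟩ := C'.exists_maximal hne
  obtain ⟨y, hxy, hy⟩ := (Set.toFinite {y | w y ≠ 0}).exists_le_maximal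
    (show w x ≠ 0 from (Finset.mem_filter.mp hx.prop).2)
  have hyC : y ∉ C' := fun h => hdisj y (Finset.mem_filter.mp h).1 (mem_maxSupport.mpr hy)
  have hle : ∀ z ∈ C', z ≤ y := fun z hz =>
    ((hchain.total hz hx.prop).elim id (hx.le_of_ge hz)).trans hxy
  have hins := hw (insert y C') (by
    rw [Finset.coe_insert]
    exact hchain.insert fun z hz _ => .inr (hle z hz))
  rw [Finset.sum_insert hyC, hsum] at hins
  have := Nat.pos_of_ne_zero hy.prop
  omega

/- A weighted form of the dual of Dilworth's theorem. -/
theorem exists_antichains_of_chain_sum_le {k : ℕ} {w : P → ℕ}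
    (hw : ∀ C : Finset P, IsChain (· ≤ ·) (C : Set P) → ∑ x ∈ C, w x ≤ k) :
    ∃ B : Fin k → Finset P, (∀ t, IsAntichain (· ≤ ·) (B t : Set P)) ∧
      ∀ x, w x = ∑ t, if x ∈ B t then 1 else 0 := by
  induction k generalizing w with
  | zero =>
    exact ⟨Fin.elim0, fun t => t.elim0, fun x => by simpa using hw {x} (by simp)⟩
  | succ k ih =>
    let w' : P → ℕ := fun x => w x - if x ∈ maxSupport w then 1 else 0
    have hw'_add : ∀ x, w x = (if x ∈ maxSupport w then 1 else 0) + w' x := fun x => by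
      change w x = _ + (w x - _)
      split_ifs with hx
      · have := (mem_maxSupport.mp hx).prop
        omega
      · omega
    have hw' : ∀ C : Finset P, IsChain (· ≤ ·) (C : Set P) → ∑ x ∈ C, w' x ≤ k := fun C hC => by
      refine Nat.le_of_lt_succ ?_
      by_cases hdisj : ∀ x ∈ C, x ∉ maxSupport w
      · exact (Finset.sum_le_sum fun x _ => Nat.sub_le _ _).trans_lt
          (sum_lt_of_disjoint_maxSupport k.succ_pos hw hC hdisj)
      · push Not at hdisj
        obtain ⟨x, hxC, hx⟩ := hdisj
        refine (Finset.sum_lt_sum (fun y _ => Nat.sub_le _ _) ⟨x, hxC, ?_⟩).trans_le (hw C hC)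
        change w' x < w x
        rw [hw'_add x, if_pos hx]
        omega
    obtain ⟨B, hB, hwB⟩ := ih hw'
    refine ⟨Fin.cons (maxSupport w) B, Fin.cases (isAntichain_maxSupport w) hB, fun x => ?_⟩
    rw [hw'_add x, hwB x, Fin.sum_univ_succ]
    rfl

end AntichainDecomposition

section PosetQ

variable {p n : ℕ}

/-- The position `(i, j)`, zero-based, of the matrix entry corresponding to `q_{i,j} ∈ Q`. -/
def cell (q : Qfin p n) : Fin p × Fin n :=
  (rowOf p n q, colOf p n q)

theorem Qfin_val_eq (q : Qfin p n) : q.val = ((rowOf p n q : ℕ) + 1, (colOf p n q : ℕ) + 1) := by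
  obtain ⟨⟨i, j⟩, hi, -, hj, -⟩ := q
  simp only [rowOf, colOf, Prod.mk.injEq]
  omega

theorem le_colOf (q : Qfin p n) : p ≤ colOf p n q := by
  obtain ⟨⟨i, j⟩, -, -, hj, -⟩ := q
  exact Nat.le_sub_one_of_lt hj

theorem cell_injective : Function.Injective (cell : Qfin p n → Fin p × Fin n) := fun q q' h => by
  obtain ⟨hrow, hcol⟩ := Prod.mk.inj h
  rw [Subtype.ext_iff, Qfin_val_eq, Qfin_val_eq, hrow, hcol]

theorem exists_cell_eq (i : Fin p) {c : Fin n} (hc : p ≤ (c : ℕ)) :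
    ∃ q : Qfin p n, cell q = (i, c) :=
  ⟨⟨(i + 1, c + 1), by dsimp only; omega⟩, rfl⟩

theorem Qfin_le_iff {q q' : Qfin p n} :
    q ≤ q' ↔ rowOf p n q ≤ rowOf p n q' ∧ colOf p n q ≤ colOf p n q' := by
  rw [← Subtype.coe_le_coe, Qfin_val_eq, Qfin_val_eq, Prod.mk_le_mk, add_le_add_iff_right,
    add_le_add_iff_right]
  rfl

instance : Finite (Qfin p n) :=
  Finite.of_injective cell cell_injective

/-- The antichain `L = {q_{j,α_j} : α_j > p}` of a tuple `α`. -/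
def antichainOf (α : Fin p → Fin n) : Finset (Qfin p n) :=
  (Set.toFinite {q | α (rowOf p n q) = colOf p n q}).toFinset

theorem mem_antichainOf {α : Fin p → Fin n} {q : Qfin p n} :
    q ∈ antichainOf α ↔ α (rowOf p n q) = colOf p n q :=
  Set.Finite.mem_toFinset _

theorem IsPBW.isAntichain_antichainOf {α : Fin p → Fin n} (hα : IsPBW p n α) :
    IsAntichain (· ≤ ·) (antichainOf α : Set (Qfin p n)) := by
  intro q hq q' hq' hne hle
  rw [Finset.mem_coe, mem_antichainOf] at hq hq'
  obtain ⟨hrow, hcol⟩ := Qfin_le_iff.mp hle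
  have hrow_ne : rowOf p n q ≠ rowOf p n q' := fun h =>
    hne (cell_injective (Prod.ext h (by rw [cell, cell, ← hq, ← hq', h])))
  rcases hcol.eq_or_lt with heq | hlt
  · exact hrow_ne (hα.1 (by rw [hq, hq', heq]))
  · refine (hα.2.2 _ _ ?_ ?_).not_ge hrow
    · exact hq ▸ le_colOf q
    · rwa [hq, hq']

theorem eq_of_rowOf_eq_of_isAntichain {B : Set (Qfin p n)} (hB : IsAntichain (· ≤ ·) B)
    {q q' : Qfin p n} (hq : q ∈ B) (hq' : q' ∈ B) (h : rowOf p n q = rowOf p n q') : q = q' := by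
  rcases le_total (colOf p n q) (colOf p n q') with hle | hle
  · exact hB.eq hq hq' (Qfin_le_iff.mpr ⟨h.le, hle⟩)
  · exact hB.eq' hq hq' (Qfin_le_iff.mpr ⟨h.ge, hle⟩)

theorem eq_of_colOf_eq_of_isAntichain {B : Set (Qfin p n)} (hB : IsAntichain (· ≤ ·) B)
    {q q' : Qfin p n} (hq : q ∈ B) (hq' : q' ∈ B) (h : colOf p n q = colOf p n q') : q = q' := by
  rcases le_total (rowOf p n q) (rowOf p n q') with hle | hle
  · exact hB.eq hq hq' (Qfin_le_iff.mpr ⟨hle, h.le⟩)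
  · exact hB.eq' hq hq' (Qfin_le_iff.mpr ⟨hle, h.ge⟩)

theorem exists_mem_antichainOf_cell_eq {α : Fin p → Fin n} {i : Fin p} (hi : p ≤ (α i : ℕ)) :
    ∃ q ∈ antichainOf α, cell q = (i, α i) := by
  obtain ⟨q, hq⟩ := exists_cell_eq i hi
  obtain ⟨rfl, hcol⟩ := Prod.mk.inj hq
  exact ⟨q, mem_antichainOf.mpr hcol.symm, hq⟩

theorem isPBW_of_isAntichain_antichainOf {α : Fin p → Fin n}
    (hdiag : ∀ i, (α i : ℕ) < p → (α i : ℕ) = i)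
    (hα : IsAntichain (· ≤ ·) (antichainOf α : Set (Qfin p n))) : IsPBW p n α := by
  refine ⟨fun i j hij => ?_, hdiag, fun j k hk hkj => ?_⟩
  · rcases lt_or_ge (α i : ℕ) p with hi | hi
    · exact Fin.ext (by rw [← hdiag i hi, ← hdiag j (hij ▸ hi), hij])
    · obtain ⟨q, hq, hqi⟩ := exists_mem_antichainOf_cell_eq hi
      obtain ⟨q', hq', hqj⟩ := exists_mem_antichainOf_cell_eq (hij ▸ hi : p ≤ (α j : ℕ))
      obtain ⟨rfl, hcol⟩ := Prod.mk.inj hqi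
      obtain ⟨rfl, hcol'⟩ := Prod.mk.inj hqj
      rw [eq_of_colOf_eq_of_isAntichain hα hq hq' (by rw [hcol, hcol', hij])]
  · obtain ⟨q, hq, hqk⟩ := exists_mem_antichainOf_cell_eq hk
    obtain ⟨q', hq', hqj⟩ := exists_mem_antichainOf_cell_eq (hk.trans hkj.le)
    obtain ⟨rfl, hcol⟩ := Prod.mk.inj hqk
    obtain ⟨rfl, hcol'⟩ := Prod.mk.inj hqj
    by_contra! hle
    rw [← hcol, ← hcol'] at hkj
    exact hkj.ne (by rw [hα.eq hq hq' (Qfin_le_iff.mpr ⟨hle, hkj.le⟩)])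

theorem exists_isPBW_antichainOf_eq (hpn : p ≤ n) {B : Finset (Qfin p n)}
    (hB : IsAntichain (· ≤ ·) (B : Set (Qfin p n))) : ∃ α, IsPBW p n α ∧ antichainOf α = B := by
  have hrow : ∀ i : Fin p, ∃ c : Fin n,
      (∃ q ∈ B, cell q = (i, c)) ∨ ((c : ℕ) = i ∧ ∀ q ∈ B, rowOf p n q ≠ i) := fun i => by
    by_cases h : ∃ q ∈ B, rowOf p n q = i
    · obtain ⟨q, hq, rfl⟩ := h
      exact ⟨colOf p n q, .inl ⟨q, hq, rfl⟩⟩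
    · exact ⟨Fin.castLE hpn i, .inr ⟨rfl, fun q hq hqi => h ⟨q, hq, hqi⟩⟩⟩
  choose α hα using hrow
  have antichainOf_eq : antichainOf α = B := by
    ext q
    rw [mem_antichainOf]
    constructor
    · intro hq
      obtain ⟨q', hq', hcell⟩ := (hα (rowOf p n q)).resolve_right fun h => by
        have := le_colOf q
        omega
      have hqq' : q' = q := cell_injective (hcell.trans (by rw [hq, cell]))
      exact hqq' ▸ hq'
    · intro hq
      obtain ⟨q', hq', hcell⟩ := (hα (rowOf p n q)).resolve_right fun h => h.2 q hq rfl
      obtain ⟨hrow, hcol⟩ := Prod.mk.inj hcell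
      rw [← hcol, eq_of_rowOf_eq_of_isAntichain hB hq' hq hrow]
  refine ⟨α, isPBW_of_isAntichain_antichainOf (fun i hi => ?_) (antichainOf_eq ▸ hB),
    antichainOf_eq⟩
  obtain ⟨q, -, hq⟩ | ⟨h, -⟩ := hα i
  · exact absurd ((Prod.mk.inj hq).2 ▸ le_colOf q) hi.not_ge
  · exact h

/-- The set `max_≺(J)`, as it is written out in `genQ`. -/
def maxElems (J : Finset (Qfin p n)) : Finset (Qfin p n) :=
  J.filter fun q => ∀ q' ∈ J, ¬ (qleF p n q q' ∧ q ≠ q')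

theorem mem_maxElems {J : Finset (Qfin p n)} {q : Qfin p n} :
    q ∈ maxElems J ↔ Maximal (· ∈ (J : Set (Qfin p n))) q := by
  rw [maxElems, Finset.mem_filter, maximal_iff]
  exact and_congr_right fun _ => forall₂_congr fun q' _ => by
    rw [not_and, not_not]
    rfl

theorem isAntichain_maxElems (J : Finset (Qfin p n)) :
    IsAntichain (· ≤ ·) (maxElems J : Set (Qfin p n)) := by
  convert setOfPred_maximal_antichain (· ∈ (J : Set (Qfin p n)))
  ext q
  exact mem_maxElems

theorem genQ_eq_monomial (J : Finset (Qfin p n)) :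
    genQ p n J =
      monomial (Finsupp.single none 1 + ∑ q ∈ maxElems J, Finsupp.single (some q) 1) 1 := by
  rw [genQ, maxElems, Finset.sum_filter]

theorem phiPBWset_eq_lowerClosure (α : Fin p → Fin n) :
    phiPBWset p n α = lowerClosure (antichainOf α : Set (Qfin p n)) := by
  ext q
  rw [SetLike.mem_coe, mem_lowerClosure]
  constructor
  · rintro ⟨i, hi, hrow, hcol⟩
    obtain ⟨q', hq'⟩ := exists_cell_eq i hi
    obtain ⟨rfl, hcol'⟩ := Prod.mk.inj hq'
    refine ⟨q', Finset.mem_coe.mpr (mem_antichainOf.mpr hcol'.symm), ?_⟩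
    rw [← Subtype.coe_le_coe, Qfin_val_eq q', hcol']
    exact ⟨hrow, hcol⟩
  · rintro ⟨q', hq', hle⟩
    rw [Finset.mem_coe, mem_antichainOf] at hq'
    rw [← Subtype.coe_le_coe, Qfin_val_eq q', ← hq'] at hle
    exact ⟨rowOf p n q', hq' ▸ le_colOf q', hle.1, hle.2⟩

theorem IsPBW.maxElems_eq {α : Fin p → Fin n} (hα : IsPBW p n α) {J : Finset (Qfin p n)}
    (hJ : (J : Set (Qfin p n)) = phiPBWset p n α) : maxElems J = antichainOf α := by
  ext q
  rw [mem_maxElems, hJ, phiPBWset_eq_lowerClosure]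
  exact hα.isAntichain_antichainOf.maximal_mem_lowerClosure_iff_mem

end PosetQ
section BalancedExponents

variable {p n : ℕ}

/-- The exponents on the `p × n` matrix that have equal row sums and vanish off the diagonal of the
left `p × p` block. -/
def balancedExponents (p n : ℕ) : AddSubmonoid (Fin p × Fin n →₀ ℕ) where
  carrier := {m | m ∈ equalRowSums (Fin p) (Fin n) ∧
    ∀ (i : Fin p) (c : Fin n), (c : ℕ) < p → (c : ℕ) ≠ i → m (i, c) = 0}
  add_mem' {a b} ha hb := ⟨add_mem ha.1 hb.1, fun i c hc hci => by
    rw [Finsupp.add_apply, ha.2 i c hc hci, hb.2 i c hc hci]⟩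
  zero_mem' := ⟨zero_mem _, fun _ _ _ _ => rfl⟩

theorem eq_of_mem_balancedExponents {m m' : Fin p × Fin n →₀ ℕ}
    (hm : m ∈ balancedExponents p n) (hm' : m' ∈ balancedExponents p n) (i₀ : Fin p)
    (hrow : ∑ c, m (i₀, c) = ∑ c, m' (i₀, c)) (hcell : ∀ q : Qfin p n, m (cell q) = m' (cell q)) :
    m = m' := by
  have off_diag : ∀ (i : Fin p) (c : Fin n), (c : ℕ) ≠ i → m (i, c) = m' (i, c) := by
    intro i c hci
    rcases lt_or_ge (c : ℕ) p with hc | hc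
    · rw [hm.2 i c hc hci, hm'.2 i c hc hci]
    · obtain ⟨q, hq⟩ := exists_cell_eq i hc
      rw [← hq, hcell]
  ext ⟨i, c⟩
  by_cases hci : (c : ℕ) = i
  · have hsum : ∑ d, m (i, d) = ∑ d, m' (i, d) := by rw [hm.1 i i₀, hm'.1 i i₀, hrow]
    rw [← Finset.add_sum_erase _ _ (Finset.mem_univ c),
      ← Finset.add_sum_erase (a := c) _ (fun d => m' (i, d)) (Finset.mem_univ c),
      Finset.sum_congr rfl fun d hd => off_diag i d fun hdi =>
        Finset.ne_of_mem_erase hd (Fin.ext (hdi.trans hci.symm))] at hsum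
    exact Nat.add_right_cancel hsum
  · exact off_diag i c hci

theorem IsPBW.graphExp_mem_balancedExponents {α : Fin p → Fin n} (hα : IsPBW p n α) :
    graphExp id α ∈ balancedExponents p n := by
  refine ⟨graphExp_perm_mem_equalRowSums 1 α, fun i c hc hci => ?_⟩
  rw [graphExp_id_apply, if_neg]
  rintro rfl
  exact hci (hα.2.1 i hc)

theorem graphExp_cell (α : Fin p → Fin n) (q : Qfin p n) :
    graphExp id α (cell q) = if q ∈ antichainOf α then 1 else 0 := by
  rw [cell, graphExp_id_apply]
  simp only [mem_antichainOf]
  congr!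

theorem IsChainBounded.mem_balancedExponents (hpn : p ≤ n) {m : Fin p × Fin n →₀ ℕ} {k : ℕ}
    (hm : IsChainBounded (rankPBW p n) m k) : m ∈ balancedExponents p n := by
  refine ⟨fun i j => (hm.row_sum i).trans (hm.row_sum j).symm, fun i c hc hci => ?_⟩
  rcases hci.lt_or_gt with h | h
  · exact hm.eq_zero_of_column_lt_row hpn h
  · exact hm.eq_zero_of_row_lt_column hpn h hc

theorem isRankChain_image_cell (hpn : p ≤ n) {C : Set (Qfin p n)} (hC : IsChain (· ≤ ·) C) :
    IsRankChain (rankPBW p n) (cell '' C) := by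
  rintro _ ⟨q, hq, rfl⟩ _ ⟨q', hq', rfl⟩ (hlt : rowOf p n q < rowOf p n q')
  have hle : q ≤ q' := (hC.total hq hq').resolve_right fun h => hlt.not_ge (Qfin_le_iff.mp h).1
  have hcol : (colOf p n q : ℕ) ≤ colOf p n q' := (Qfin_le_iff.mp hle).2
  have := le_colOf q
  simp only [cell, rankPBW_eq hpn]
  split_ifs <;> omega

theorem IsChainBounded.exists_sum_graphExp (hpn : p ≤ n) {m : Fin p × Fin n →₀ ℕ} {k : ℕ}
    (hm : IsChainBounded (rankPBW p n) m k) :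
    ∃ α : Fin k → Fin p → Fin n, (∀ t, IsPBW p n (α t)) ∧ m = ∑ t, graphExp id (α t) := by
  have hchain : ∀ C : Finset (Qfin p n), IsChain (· ≤ ·) (C : Set (Qfin p n)) →
      ∑ q ∈ C, m (cell q) ≤ k := fun C hC => by
    rw [← Finset.sum_image cell_injective.injOn]
    refine hm.chain_sum_le _ ?_
    rw [Finset.coe_image]
    exact isRankChain_image_cell hpn hC
  obtain ⟨B, hB, hmB⟩ := exists_antichains_of_chain_sum_le hchain
  choose α hα hαB using fun t => exists_isPBW_antichainOf_eq hpn (hB t)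
  refine ⟨α, hα, ?_⟩
  have hsum : ∑ t, graphExp id (α t) ∈ balancedExponents p n :=
    sum_mem fun t _ => (hα t).graphExp_mem_balancedExponents
  ext ⟨i, c⟩
  refine DFunLike.congr_fun
    (eq_of_mem_balancedExponents (hm.mem_balancedExponents hpn) hsum i ?_ fun q => ?_) (i, c)
  · simp only [hm.row_sum, Finsupp.finsetSum_apply]
    rw [Finset.sum_comm]
    simp only [sum_row_graphExp_id, Finset.sum_const, Finset.card_univ, Fintype.card_fin,
      smul_eq_mul, mul_one]
  · simp only [hmB, Finsupp.finsetSum_apply, graphExp_cell, hαB]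
    congr!

end BalancedExponents

section InitialAlgebra

variable {p n : ℕ}

theorem Dmin_eq_genericMinor (α : Fin p → Fin n) : Dmin p n α = genericMinor ℂ id α := by
  rw [Dmin, genericMinor]
  congr!

theorem Pluecker_le_supportedSubalgebra :
    Pluecker p n ≤ supportedSubalgebra ℂ (equalRowSums (Fin p) (Fin n)) := by
  refine Algebra.adjoin_le ?_
  rintro _ ⟨α, rfl⟩ m hm
  rw [Dmin_eq_genericMinor] at hm
  obtain ⟨σ, rfl⟩ := exists_perm_of_mem_support_genericMinor hm
  exact graphExp_perm_mem_equalRowSums σ α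

theorem addCommonRow_mem_of_mem_Pluecker {F : MvPolynomial (Fin p × Fin n) ℂ}
    (hF : F ∈ Pluecker p n) :
    addCommonRow (Fin p) (Fin n) ℂ F ∈
      supportedSubalgebra ℂ (commonRowBound (Fin p) (Fin n) (Fintype.card (Fin p))) := by
  suffices h : Pluecker p n ≤ (supportedSubalgebra ℂ
      (commonRowBound (Fin p) (Fin n) (Fintype.card (Fin p)))).comap
      (addCommonRow (Fin p) (Fin n) ℂ) from h hF
  refine Algebra.adjoin_le ?_
  rintro _ ⟨α, rfl⟩
  rw [Dmin_eq_genericMinor]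
  exact addCommonRow_genericMinor_mem α

theorem IsPBW.initTerm_Dmin (hpn : p ≤ n) {α : Fin p → Fin n} (hα : IsPBW p n α) :
    initTerm (degRevLex (rankPBW p n)) (Dmin p n α) = monomial (graphExp id α) 1 := by
  have hrank := isRowMajor_rankPBW hpn
  rw [Dmin_eq_genericMinor, (isLeadingExponent_genericMinor hrank hα.1
    (hα.isRankAntichain hpn)).initTerm_eq (degRevLex_asymm hrank.injective),
    coeff_genericMinor_id α hα.1]

/-- The monomials `z_{1,α_1} ⋯ z_{p,α_p}` of the PBW tuples `α`. -/
def pbwMonomials (p n : ℕ) : Set (MvPolynomial (Fin p × Fin n) ℂ) :=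
  {f | ∃ α, IsPBW p n α ∧ f = monomial (graphExp id α) 1}

theorem adjoin_pbwMonomials_le_supportedSubalgebra :
    Algebra.adjoin ℂ (pbwMonomials p n) ≤ supportedSubalgebra ℂ (balancedExponents p n) := by
  refine Algebra.adjoin_le ?_
  rintro _ ⟨α, hα, rfl⟩
  exact monomial_mem_supportedSubalgebra hα.graphExp_mem_balancedExponents 1

theorem IsChainBounded.monomial_mem_adjoin (hpn : p ≤ n) {m : Fin p × Fin n →₀ ℕ} {k : ℕ}
    (hm : IsChainBounded (rankPBW p n) m k) (r : ℂ) :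
    monomial m r ∈ Algebra.adjoin ℂ (pbwMonomials p n) := by
  obtain ⟨α, hα, rfl⟩ := hm.exists_sum_graphExp hpn
  rw [← mul_one r, ← smul_eq_mul, ← smul_monomial, monomial_sum_one]
  refine Subalgebra.smul_mem _ (Subalgebra.prod_mem _ fun t _ => ?_) r
  exact Algebra.subset_adjoin ⟨α t, hα t, rfl⟩

theorem adjoin_initTerm_Pluecker (hp : 1 ≤ p) (hpn : p ≤ n) :
    Algebra.adjoin ℂ (initTerm (degRevLex (rankPBW p n)) ''
      (Pluecker p n : Set (MvPolynomial (Fin p × Fin n) ℂ))) =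
      Algebra.adjoin ℂ (pbwMonomials p n) := by
  refine le_antisymm (Algebra.adjoin_le ?_) (Algebra.adjoin_mono ?_)
  · rintro _ ⟨F, hF, rfl⟩
    obtain hzero | ⟨m, hm, hmF⟩ :=
      initTerm_eq_zero_or_exists_isLeadingExponent (degRevLex (rankPBW p n)) F
    · rw [hzero]
      exact zero_mem _
    · rw [hmF]
      exact (hm.isChainBounded (isRowMajor_rankPBW hpn) (Pluecker_le_supportedSubalgebra hF)
        (addCommonRow_mem_of_mem_Pluecker hF) ⟨0, hp⟩).monomial_mem_adjoin hpn _
  · rintro _ ⟨α, hα, rfl⟩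
    exact ⟨Dmin p n α, Algebra.subset_adjoin ⟨α, rfl⟩, hα.initTerm_Dmin hpn⟩

end InitialAlgebra

section HibiRing

variable {p n : ℕ}

/-- The exponent in `s, y_q` of the Hibi ring that corresponds to an exponent `m` on the `p × n`
matrix: `s` (the variable `none`) receives the sum of row `i₀`, and `y_q` the entry of `m` at the
cell of `q`. -/
def hibiExp (i₀ : Fin p) : (Fin p × Fin n →₀ ℕ) →+ (Option (Qfin p n) →₀ ℕ) where
  toFun m := (m.comapDomain cell cell_injective.injOn).optionElim (∑ c, m (i₀, c))
  map_zero' := by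
    ext (_ | q) <;> simp
  map_add' a b := by
    ext (_ | q) <;> simp [Finset.sum_add_distrib]

theorem hibiExp_none (i₀ : Fin p) (m : Fin p × Fin n →₀ ℕ) :
    hibiExp i₀ m none = ∑ c, m (i₀, c) :=
  Finsupp.optionElim_apply_none _ _

theorem hibiExp_some (i₀ : Fin p) (m : Fin p × Fin n →₀ ℕ) (q : Qfin p n) :
    hibiExp i₀ m (some q) = m (cell q) :=
  Finsupp.optionElim_apply_some _ _ _

theorem hibiExp_injOn (i₀ : Fin p) :
    Set.InjOn (hibiExp (n := n) i₀) (balancedExponents p n) := fun m hm m' hm' h =>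
  eq_of_mem_balancedExponents hm hm' i₀
    (by rw [← hibiExp_none, h, hibiExp_none]) fun q => by rw [← hibiExp_some i₀, h, hibiExp_some]

theorem hibiExp_graphExp (i₀ : Fin p) (α : Fin p → Fin n) :
    hibiExp i₀ (graphExp id α) =
      Finsupp.single none 1 + ∑ q ∈ antichainOf α, Finsupp.single (some q) 1 := by
  ext (_ | q)
  · simp [hibiExp_none, sum_row_graphExp_id]
  · simp [hibiExp_some, graphExp_cell, Finsupp.single_apply]

theorem monomialMap_hibiExp_graphExp (i₀ : Fin p) {α : Fin p → Fin n} {J : Finset (Qfin p n)}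
    (hJ : maxElems J = antichainOf α) :
    monomialMap ℂ (hibiExp i₀) (monomial (graphExp id α) 1) = genQ p n J := by
  rw [monomialMap_monomial, hibiExp_graphExp, genQ_eq_monomial, hJ]

theorem map_adjoin_pbwMonomials (hpn : p ≤ n) (i₀ : Fin p) :
    (Algebra.adjoin ℂ (pbwMonomials p n)).map (monomialMap ℂ (hibiExp i₀)) = hibiQ p n := by
  rw [AlgHom.map_adjoin, hibiQ]
  congr 1
  ext f
  constructor
  · rintro ⟨_, ⟨α, hα, rfl⟩, rfl⟩
    let J : Finset (Qfin p n) := (Set.toFinite (phiPBWset p n α)).toFinset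
    have hJ : (J : Set (Qfin p n)) = phiPBWset p n α := Set.Finite.coe_toFinset _
    have hlower : IsLowerSet (J : Set (Qfin p n)) := by
      rw [hJ, phiPBWset_eq_lowerClosure]
      exact LowerSet.lower _
    exact ⟨J, fun a ha b hba => hlower hba ha,
      monomialMap_hibiExp_graphExp i₀ (hα.maxElems_eq hJ)⟩
  · rintro ⟨J, -, rfl⟩
    obtain ⟨α, hα, hαJ⟩ := exists_isPBW_antichainOf_eq hpn (isAntichain_maxElems J)
    exact ⟨_, ⟨α, hα, rfl⟩, monomialMap_hibiExp_graphExp i₀ hαJ.symm⟩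

theorem exists_algEquiv_hibiQ (hpn : p ≤ n) (i₀ : Fin p) :
    ∃ e : Algebra.adjoin ℂ (pbwMonomials p n) ≃ₐ[ℂ] hibiQ p n,
      ∀ x, (e x : MvPolynomial (Option (Qfin p n)) ℂ) = monomialMap ℂ (hibiExp i₀) x :=
  exists_algEquiv_of_injOn _
    ((injOn_monomialMap (hibiExp_injOn i₀)).mono adjoin_pbwMonomials_le_supportedSubalgebra)
    (map_adjoin_pbwMonomials hpn i₀)

theorem prod_antichainOf {M : Type*} [CommMonoid M] (α : Fin p → Fin n) (f : Fin p → M) :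
    ∏ q ∈ antichainOf α, f (rowOf p n q) = ∏ i, if p ≤ (α i : ℕ) then f i else 1 := by
  rw [← Finset.prod_filter]
  refine Finset.prod_nbij (rowOf p n) (fun q hq => ?_) (fun q hq q' hq' h => ?_) (fun i hi => ?_)
    fun _ _ => rfl
  · rw [Finset.mem_filter, mem_antichainOf.mp hq]
    exact ⟨Finset.mem_univ _, le_colOf q⟩
  · rw [Finset.mem_coe, mem_antichainOf] at hq hq'
    exact cell_injective (Prod.ext h (by rw [cell, cell, ← hq, ← hq', h]))
  · obtain ⟨q, hq, hqi⟩ := exists_mem_antichainOf_cell_eq (Finset.mem_filter.mp hi).2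
    exact ⟨q, hq, (Prod.mk.inj hqi).1⟩

theorem IsPBW.monomial_mul_prod_diag (hpn : p ≤ n) {α : Fin p → Fin n} (hα : IsPBW p n α) :
    (monomial (graphExp id α) 1 : MvPolynomial (Fin p × Fin n) ℂ) *
        ∏ q ∈ antichainOf α, X (rowOf p n q, diagColOf p n q) =
      (∏ i, X (i, Fin.castLE hpn i)) * ∏ q ∈ antichainOf α, X (rowOf p n q, colOf p n q) := by
  have hdiag : ∏ q ∈ antichainOf α, X (rowOf p n q, diagColOf p n q) =
      ∏ i, if p ≤ (α i : ℕ) then (X (i, Fin.castLE hpn i) : MvPolynomial (Fin p × Fin n) ℂ)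
        else 1 :=
    prod_antichainOf α fun i => X (i, Fin.castLE hpn i)
  have hcol : ∏ q ∈ antichainOf α, X (rowOf p n q, colOf p n q) =
      ∏ i, if p ≤ (α i : ℕ) then (X (i, α i) : MvPolynomial (Fin p × Fin n) ℂ) else 1 := by
    rw [← prod_antichainOf α fun i => X (i, α i)]
    exact Finset.prod_congr rfl fun q hq => by rw [mem_antichainOf.mp hq]
  rw [graphExp, monomial_sum_one, hdiag, hcol, ← Finset.prod_mul_distrib,
    ← Finset.prod_mul_distrib]
  refine Finset.prod_congr rfl fun i _ => ?_
  split_ifs with hi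
  · exact mul_comm _ _
  · have hαi : α i = Fin.castLE hpn i := Fin.ext (hα.2.1 i (not_le.mp hi))
    rw [hαi]
    rfl

end HibiRing

/-- The initial subalgebra `in_{<_pbw}(𝒫)` is isomorphic, as an
ℕ₀-graded algebra, to the generalized Hibi ring `A_{∅,Q}(Q,≺)`, via
`in_{<_pbw}(D_I) ↦ s·y^{v_{∅,Q}(φ_pbw(I))}`; the inverse is induced by
`y_{q_{i,j}} ↦ z_{i,j}·z_{i,i}⁻¹`, `s ↦ z_{1,1}⋯z_{p,p}` (stated below in
denominator-free form). -/
theorem statement6 (p n : ℕ) (hp : 1 ≤ p) (hpn : p < n) :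
    ∃ e : ↥(Algebra.adjoin ℂ (initTerm (degRevLex (rankPBW p n)) ''
          ((Pluecker p n : Set (MvPolynomial (Fin p × Fin n) ℂ))))) ≃ₐ[ℂ]
        ↥(hibiQ p n),
      (∀ (α : Fin p → Fin n), IsPBW p n α →
        ∀ J : Finset (Qfin p n), (↑J : Set (Qfin p n)) = phiPBWset p n α →
          ∀ (h1 : initTerm (degRevLex (rankPBW p n)) (Dmin p n α) ∈
              Algebra.adjoin ℂ (initTerm (degRevLex (rankPBW p n)) ''
                ((Pluecker p n : Set (MvPolynomial (Fin p × Fin n) ℂ)))))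
            (h2 : genQ p n J ∈ hibiQ p n),
            e ⟨initTerm (degRevLex (rankPBW p n)) (Dmin p n α), h1⟩ =
              ⟨genQ p n J, h2⟩) ∧
      (∀ J : Finset (Qfin p n), (∀ a ∈ J, ∀ b, qleF p n b a → b ∈ J) →
        ∀ h2 : genQ p n J ∈ hibiQ p n,
          ((e.symm ⟨genQ p n J, h2⟩ : _) : MvPolynomial (Fin p × Fin n) ℂ) *
              ∏ q ∈ J.filter (fun q => ∀ q' ∈ J, ¬ (qleF p n q q' ∧ q ≠ q')),
                X (rowOf p n q, diagColOf p n q) =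
            (∏ i : Fin p, X (i, Fin.castLE hpn.le i)) *
              ∏ q ∈ J.filter (fun q => ∀ q' ∈ J, ¬ (qleF p n q q' ∧ q ≠ q')),
                X (rowOf p n q, colOf p n q)) := by
  rw [adjoin_initTerm_Pluecker hp hpn.le]
  obtain ⟨e, he⟩ := exists_algEquiv_hibiQ hpn.le ⟨0, hp⟩
  refine ⟨e, fun α hα J hJ h1 h2 => ?_, fun J _ h2 => ?_⟩
  · have he_initTerm : (e ⟨_, h1⟩ : MvPolynomial (Option (Qfin p n)) ℂ) =
        monomialMap ℂ (hibiExp ⟨0, hp⟩) (initTerm (degRevLex (rankPBW p n)) (Dmin p n α)) := he _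
    rw [Subtype.ext_iff, he_initTerm, hα.initTerm_Dmin hpn.le,
      monomialMap_hibiExp_graphExp _ (hα.maxElems_eq hJ)]
  · obtain ⟨α, hα, hαJ⟩ := exists_isPBW_antichainOf_eq hpn.le (isAntichain_maxElems J)
    let x : Algebra.adjoin ℂ (pbwMonomials p n) :=
      ⟨monomial (graphExp id α) 1, Algebra.subset_adjoin ⟨α, hα, rfl⟩⟩
    have hx : e x = ⟨genQ p n J, h2⟩ :=
      Subtype.ext ((he x).trans (monomialMap_hibiExp_graphExp _ hαJ.symm))
    rw [← hx, e.symm_apply_apply]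
    change _ * ∏ q ∈ maxElems J, _ = _ * ∏ q ∈ maxElems J, _
    rw [← hαJ]
    exact hα.monomial_mul_prod_diag hpn.le
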